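/- Let X = (X_N)_{N∈ℕ} be a virtual Markov chain on a probability space (Ω,𝔉,ℙ), and for each N let ν_N = ℙ ∘ X_N(0)^{-1} be the law of X_N(0). Then ν = (ν_N)_{N∈ℕ} is a virtual distribution (ν ∈ 𝓓₁), and there exists a virtual transition matrix K = (K_N)_{N∈ℕ} ∈ 𝓚 such that, for every N ∈ ℕ, X_N is a Markov chain with initial distribution ν_N and transition matrix K_N, and the pair (ν, K) is compatible. -/

import Mathlib

open MeasureTheory

/-- The path space 𝒞: sequences on ℕ₀ = {0,1,2,...} for which the cemetery state 0 is
absorbing. -/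
def PathSpace : Set (ℕ → ℕ) := {x | ∀ i j : ℕ, i ≤ j → x i = 0 → x j = 0}

/-- The path space 𝒞_N: paths taking values in {0,...,N}. -/
def PathSpaceN (N : ℕ) : Set (ℕ → ℕ) := {x | x ∈ PathSpace ∧ ∀ i, x i ≤ N}

/-- The successive indices I_{x,N}(j) (valued in ℕ∞) at which `x` visits {0,...,N}. -/
noncomputable def hitIdx (x : ℕ → ℕ) (N : ℕ) : ℕ → ℕ∞
  | 0 => sInf {e : ℕ∞ | ∃ i : ℕ, e = (i : ℕ∞) ∧ x i ≤ N}
  | j + 1 => sInf {e : ℕ∞ | ∃ i : ℕ, e = (i : ℕ∞) ∧ hitIdx x N j < (i : ℕ∞) ∧ x i ≤ N}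

/-- The projection P_N : 𝒞 → 𝒞_N. -/
noncomputable def proj (N : ℕ) (x : ℕ → ℕ) (j : ℕ) : ℕ :=
  if hitIdx x N j = ⊤ then 0 else x (hitIdx x N j).toNat

/-- The virtual path space 𝓒, indexed by ℕ = {1,2,...} (as `ℕ+`). -/
def VirtualPathSpace : Set (ℕ+ → ℕ → ℕ) :=
  {x | (∀ N : ℕ+, x N ∈ PathSpaceN N) ∧ ∀ N : ℕ+, proj N (x (N + 1)) = x N}

/-- `X` is a Markov chain (on ℕ₀) under `P` with initial distribution `ν` and transition
matrix `K`. -/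
def IsMarkovChain {Ω : Type*} [MeasurableSpace Ω] (P : Measure Ω)
    (X : ℕ → Ω → ℕ) (ν : ℕ → ℝ) (K : ℕ → ℕ → ℝ) : Prop :=
  (∀ i, Measurable (X i)) ∧
  ∀ (l : ℕ) (a : ℕ → ℕ),
    P {ω | ∀ i ≤ l, X i ω = a i}
      = ENNReal.ofReal (ν (a 0) * ∏ k ∈ Finset.Icc 1 l, K (a (k - 1)) (a k))

/-- `K` is a row-stochastic matrix on ℕ₀. -/
def IsStochastic (K : ℕ → ℕ → ℝ) : Prop :=
  (∀ a b, 0 ≤ K a b) ∧ ∀ a, HasSum (K a) 1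

/-- Membership in 𝒦_N: row-stochastic with `K a a = 1` for all `a ∉ {1,...,N}`. -/
def MemKN (N : ℕ) (K : ℕ → ℕ → ℝ) : Prop :=
  IsStochastic K ∧ ∀ a : ℕ, ¬(1 ≤ a ∧ a ≤ N) → K a a = 1

/-- `ν` is a probability vector on ℕ₀. -/
def IsProbVec (ν : ℕ → ℝ) : Prop := (∀ a, 0 ≤ ν a) ∧ HasSum ν 1

/-- `X` is a virtual Markov chain under `P`. -/
def IsVMC {Ω : Type*} [MeasurableSpace Ω] (P : Measure Ω) (X : Ω → ℕ+ → ℕ → ℕ) : Prop :=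
  (∀ᵐ ω ∂P, X ω ∈ VirtualPathSpace) ∧
  ∀ N : ℕ+, ∃ (ν : ℕ → ℝ) (K : ℕ → ℕ → ℝ),
    IsProbVec ν ∧ (∀ a : ℕ, (N : ℕ) < a → ν a = 0) ∧ MemKN N K ∧
    IsMarkovChain P (fun i ω => X ω N i) ν K

/-- The projection P_N : 𝒦_{N+1} → 𝒦_N on transition matrices. -/
noncomputable def projK (N : ℕ) (K : ℕ → ℕ → ℝ) : ℕ → ℕ → ℝ := fun a b =>
  if 1 ≤ a ∧ a ≤ N then
    (if b ≤ N then
      (if K (N + 1) (N + 1) < 1 then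
        K a b + K a (N + 1) * K (N + 1) b / (1 - K (N + 1) (N + 1))
      else if b = 0 then K a 0 + K a (N + 1)
      else K a b)
    else 0)
  else if a = b then 1 else 0

/-- Membership in the space 𝓚 of virtual transition matrices. -/
def MemVTM (K : ℕ+ → ℕ → ℕ → ℝ) : Prop :=
  (∀ N : ℕ+, MemKN N (K N)) ∧ ∀ N : ℕ+, projK N (K (N + 1)) = K N

/-- The constants C^K_{N,a} (with `C^K_{0,0} = 0` by convention). -/
noncomputable def Ccoef (K : ℕ+ → ℕ → ℕ → ℝ) (N a : ℕ) : ℝ :=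
  if N = 0 then 0
  else if K N.succPNat (N + 1) (N + 1) < 1 then
    K N.succPNat (N + 1) a / (1 - K N.succPNat (N + 1) (N + 1))
  else if a = 0 then 1 else 0

/-- Compatibility of a virtual distribution with a virtual transition matrix:
ν_N(a) = ν_{N+1}(a) + ν_{N+1}(N+1)·C^K_{N,a}. -/
def Compatible (ν : ℕ+ → ℕ → ℝ) (K : ℕ+ → ℕ → ℕ → ℝ) : Prop :=
  ∀ (N : ℕ+) (a : ℕ), a ≤ (N : ℕ) →
    ν N a = ν (N + 1) a + ν (N + 1) ((N : ℕ) + 1) * Ccoef K (N : ℕ) a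

/-- Membership in the space 𝓓₁ of virtual distributions. -/
def MemD1 (ν : ℕ+ → ℕ → ℝ) : Prop :=
  (∀ (N : ℕ+) (a : ℕ), 0 ≤ ν N a) ∧
  (∀ N : ℕ+, ∑ a ∈ Finset.range ((N : ℕ) + 1), ν N a = 1) ∧
  (∀ (N : ℕ+) (a : ℕ), (N : ℕ) < a → ν N a = 0) ∧
  (∀ (N : ℕ+) (a : ℕ), a ≤ (N : ℕ) → ν (N + 1) a ≤ ν N a)

/-!
A path of level `N` is the path of level `N + 1` watched only while it is in `{0, …, N}`. Between
two visits to that set the level `N + 1` chain sits at `N + 1`, and summing over the length of this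
sojourn gives a geometric series: from `a`, the watched chain moves to `b ≠ 0` with probability
`K a b + K a (N + 1) * K (N + 1) b / (1 - K (N + 1) (N + 1))`, which is `projK N K a b`. The same
computation at time `0` gives compatibility of the initial laws. The value `0` also collects the
paths that never return to `{0, …, N}`, so its probability is read off from the total mass instead.

This identifies `projK N (K (N + 1))` with `K N` only on the rows of states which the chain visits
with positive probability. The other rows are not determined by the law, and a choice of transition
matrices made level by level has no reason to be consistent there. Sending every unvisited state to
the cemetery makes the choice canonical, and `projK` respects it because a state `a ≤ N` is visited
at level `N` if it is visited at level `N + 1`.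
-/

section HittingTimes

variable {x : ℕ → ℕ} {N j n b : ℕ}

lemma sInf_natCast_eq_iff_isLeast {p : ℕ → Prop} :
    sInf {e : ℕ∞ | ∃ i : ℕ, e = i ∧ p i} = n ↔ IsLeast {i | p i} n := by
  constructor
  · intro h
    have hne : {e : ℕ∞ | ∃ i : ℕ, e = i ∧ p i}.Nonempty := by
      by_contra hempty
      rw [Set.not_nonempty_iff_eq_empty.mp hempty, sInf_empty] at h
      exact ENat.natCast_ne_top n h.symm
    obtain ⟨i, hi, hpi⟩ := h ▸ csInf_mem hne
    obtain rfl : n = i := by exact_mod_cast hi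
    refine ⟨hpi, fun m hm => ?_⟩
    have hle : (n : ℕ∞) ≤ m := h ▸ sInf_le ⟨m, rfl, hm⟩
    exact_mod_cast hle
  · rintro ⟨hn, hle⟩
    refine IsLeast.csInf_eq ⟨⟨n, rfl, hn⟩, ?_⟩
    rintro _ ⟨i, rfl, hi⟩
    exact_mod_cast hle hi

lemma hitIdx_zero_eq_iff : hitIdx x N 0 = n ↔ x n ≤ N ∧ ∀ i < n, N < x i := by
  rw [hitIdx, sInf_natCast_eq_iff_isLeast]
  refine and_congr_right fun _ => ⟨fun h i hi => ?_, fun h i hi => ?_⟩ <;> by_contra hlt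
  · exact absurd (h (not_lt.mp hlt)) (by omega)
  · exact absurd (h i (by omega)) (not_lt.mpr hi)

lemma hitIdx_succ_eq_iff :
    hitIdx x N (j + 1) = n ↔
      ∃ m < n, hitIdx x N j = m ∧ x n ≤ N ∧ ∀ i, m < i → i < n → N < x i := by
  rw [hitIdx, sInf_natCast_eq_iff_isLeast]
  constructor
  · rintro ⟨⟨hlt, hn⟩, hle⟩
    obtain ⟨m, hm⟩ := ENat.ne_top_iff_exists.mp (ne_top_of_lt hlt)
    simp only [← hm, Nat.cast_lt] at hlt hle
    refine ⟨m, hlt, hm.symm, hn, fun i hmi hin => ?_⟩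
    by_contra hi
    exact absurd (hle ⟨hmi, not_lt.mp hi⟩) (by omega)
  · rintro ⟨m, hmn, hm, hn, hbtw⟩
    simp only [hm, Nat.cast_lt]
    refine ⟨⟨hmn, hn⟩, fun i ⟨hmi, hi⟩ => ?_⟩
    by_contra hlt
    exact absurd (hbtw i hmi (by omega)) (not_lt.mpr hi)

lemma apply_le_of_hitIdx_eq (h : hitIdx x N j = n) : x n ≤ N := by
  cases j with
  | zero => exact (hitIdx_zero_eq_iff.mp h).1
  | succ j =>
    obtain ⟨-, -, -, hn, -⟩ := hitIdx_succ_eq_iff.mp h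
    exact hn

lemma exists_hitIdx_eq (hn : x n ≤ N) : ∃ j, hitIdx x N j = n := by
  induction n using Nat.strong_induction_on with
  | _ n ih =>
    by_cases hfirst : ∀ i < n, N < x i
    · exact ⟨0, hitIdx_zero_eq_iff.mpr ⟨hn, hfirst⟩⟩
    · obtain ⟨i, hin, hi⟩ : ∃ i < n, x i ≤ N := by simpa using hfirst
      obtain ⟨hlt, hle⟩ :=
        Nat.findGreatest_spec (P := fun i => i < n ∧ x i ≤ N) hin.le ⟨hin, hi⟩
      obtain ⟨j, hj⟩ := ih _ hlt hle
      refine ⟨j + 1, hitIdx_succ_eq_iff.mpr ⟨_, hlt, hj, hn, fun k hk hkn => ?_⟩⟩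
      by_contra hxk
      exact Nat.findGreatest_is_greatest hk hkn.le ⟨hkn, not_lt.mp hxk⟩

lemma dependsOn_hitIdx_eq (N j n : ℕ) :
    DependsOn (fun x : ℕ → ℕ => hitIdx x N j = n) (Set.Iic n) := by
  induction j generalizing n with
  | zero =>
    intro x y hxy
    simp only [hitIdx_zero_eq_iff, hxy n Set.self_mem_Iic]
    exact propext <| and_congr_right fun _ =>
      forall₂_congr fun i hi => by rw [hxy i (Set.mem_Iic.mpr hi.le)]
  | succ j ih =>
    intro x y hxy
    simp only [hitIdx_succ_eq_iff, hxy n Set.self_mem_Iic]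
    refine propext <| exists_congr fun m => and_congr_right fun hm => ?_
    refine and_congr (ih m fun i hi => hxy i (hi.trans hm.le)).to_iff <|
      and_congr_right fun _ => forall₃_congr fun i _ hi => ?_
    rw [hxy i (Set.mem_Iic.mpr hi.le)]

lemma proj_eq_of_hitIdx_eq (h : hitIdx x N j = n) : proj N x j = x n := by
  simp [proj, h]

lemma proj_le (N : ℕ) (x : ℕ → ℕ) (j : ℕ) : proj N x j ≤ N := by
  by_cases h : hitIdx x N j = ⊤
  · simp [proj, h]
  · obtain ⟨n, hn⟩ := ENat.ne_top_iff_exists.mp h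
    exact proj_eq_of_hitIdx_eq hn.symm ▸ apply_le_of_hitIdx_eq hn.symm

-- The cemetery value `b = 0` is excluded: `proj` also takes it when there is no `j`-th visit.
lemma proj_eq_iff (hb : b ≠ 0) : proj N x j = b ↔ ∃ n : ℕ, hitIdx x N j = n ∧ x n = b := by
  constructor
  · intro h
    have hfin : hitIdx x N j ≠ ⊤ := fun htop => hb (by simp [← h, proj, htop])
    obtain ⟨n, hn⟩ := ENat.ne_top_iff_exists.mp hfin
    exact ⟨n, hn.symm, (proj_eq_of_hitIdx_eq hn.symm).symm.trans h⟩
  · rintro ⟨n, hn, rfl⟩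
    exact proj_eq_of_hitIdx_eq hn

lemma exists_proj_eq (hn : x n ≤ N) : ∃ j, proj N x j = x n :=
  (exists_hitIdx_eq hn).imp fun _ => proj_eq_of_hitIdx_eq

end HittingTimes

section Measurability

lemma measurableSet_of_dependsOn {ι α : Type*} [MeasurableSpace α] [Countable α]
    [MeasurableSingletonClass α] {S : Set (ι → α)} {s : Set ι} [Finite s]
    (hS : DependsOn (· ∈ S) s) : MeasurableSet S := by
  obtain ⟨g, hg⟩ := dependsOn_iff_exists_comp.mp hS
  have hpre : S = s.domRestrict ⁻¹' {t | g t} := Set.ext fun x => (congrFun hg x).to_iff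
  rw [hpre]
  exact measurable_pi_lambda _ (fun i => measurable_pi_apply i.1) (.of_discrete)

lemma measurable_hitIdx (N j : ℕ) : Measurable fun x : ℕ → ℕ => hitIdx x N j := by
  have hfin (n : ℕ) : MeasurableSet {x : ℕ → ℕ | hitIdx x N j = n} :=
    measurableSet_of_dependsOn (dependsOn_hitIdx_eq N j n)
  refine measurable_to_countable' fun e => ?_
  induction e with
  | coe n => exact hfin n
  | top =>
    have htop : (fun x : ℕ → ℕ => hitIdx x N j) ⁻¹' {⊤} = (⋃ n : ℕ, {x | hitIdx x N j = n})ᶜ := by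
      ext x
      simp [ENat.eq_top_iff_forall_ne, eq_comm]
    rw [htop]
    exact (MeasurableSet.iUnion hfin).compl

lemma measurable_proj (N : ℕ) : Measurable (proj N) := by
  refine measurable_pi_lambda _ fun j => ?_
  have heval : Measurable fun p : (ℕ → ℕ) × ℕ => p.1 p.2 :=
    measurable_from_prod_countable_left measurable_pi_apply
  refine Measurable.ite (measurable_hitIdx N j (measurableSet_singleton ⊤)) measurable_const ?_
  exact heval.comp (measurable_id.prodMk
    ((Measurable.of_discrete (f := ENat.toNat)).comp (measurable_hitIdx N j)))

lemma measurableSet_apply_eq (i a : ℕ) : MeasurableSet {x : ℕ → ℕ | x i = a} :=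
  measurableSet_eq_fun (measurable_pi_apply i) measurable_const

lemma measurableSet_forall_apply_le (N : ℕ) : MeasurableSet {x : ℕ → ℕ | ∀ i, x i ≤ N} := by
  measurability

lemma measurableSet_proj_apply_eq (N j a : ℕ) : MeasurableSet {x : ℕ → ℕ | proj N x j = a} :=
  measurable_proj N (measurableSet_apply_eq j a)

end Measurability

lemma measure_iUnion_inter_eq_mul {α ι : Type*} [MeasurableSpace α] [Countable ι] {μ : Measure α}
    {F : ι → Set α} {B : Set α} {c : ENNReal} (hd : Pairwise (Function.onFun Disjoint F))
    (hF : ∀ i, MeasurableSet (F i)) (hB : MeasurableSet B)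
    (h : ∀ i, μ (F i ∩ B) = μ (F i) * c) :
    μ ((⋃ i, F i) ∩ B) = μ (⋃ i, F i) * c := by
  have hd' : Pairwise (Function.onFun Disjoint fun i => F i ∩ B) := fun i k hik =>
    (hd hik).mono Set.inter_subset_left Set.inter_subset_left
  rw [Set.iUnion_inter, measure_iUnion hd' fun i => (hF i).inter hB, measure_iUnion hd hF,
    ← ENNReal.tsum_mul_right]
  exact tsum_congr h

section MarkovLaw

/-- `μ` is the law on path space of a Markov chain with transition matrix `K`; the initial
distribution is read off from `μ`. -/
def IsMarkovLaw (μ : Measure (ℕ → ℕ)) (K : ℕ → ℕ → ℝ) : Prop :=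
  IsMarkovChain μ (fun i x => x i) (fun a => μ.real {x | x 0 = a}) K

/-- The paths that sit at `M` at the `k` times `n, …, n + k - 1`. -/
def staySet (M n k : ℕ) : Set (ℕ → ℕ) := {x | ∀ i < k, x (n + i) = M}

/-- The paths that, from time `n` on, sit at `M` for some (possibly zero) time and then take the
value `b`. -/
def exitSet (M b n : ℕ) : Set (ℕ → ℕ) := {x | ∃ k, x ∈ staySet M n k ∧ x (n + k) = b}

variable {μ : Measure (ℕ → ℕ)} {K : ℕ → ℕ → ℝ} {S : Set (ℕ → ℕ)} {M n a b : ℕ}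

lemma IsMarkovLaw.measure_cylinder_inter (hμ : IsMarkovLaw μ K) (hK : ∀ a b, 0 ≤ K a b)
    (x : ℕ → ℕ) (n b : ℕ) :
    μ ({y | ∀ i ≤ n, y i = x i} ∩ {y | y (n + 1) = b}) =
      μ {y | ∀ i ≤ n, y i = x i} * ENNReal.ofReal (K (x n) b) := by
  let x' := Function.update x (n + 1) b
  have hx'_le {i : ℕ} (hi : i ≤ n) : x' i = x i := Function.update_of_ne (by omega) _ _
  have hx'_succ : x' (n + 1) = b := Function.update_self ..
  have hcyl : {y : ℕ → ℕ | ∀ i ≤ n, y i = x i} ∩ {y | y (n + 1) = b} =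
      {y | ∀ i ≤ n + 1, y i = x' i} := by
    ext y
    simp only [Set.mem_inter_iff, Set.mem_ofPred_eq, Nat.le_succ_iff, or_imp, forall_and,
      forall_eq, hx'_succ]
    exact and_congr_left' (forall₂_congr fun i hi => by rw [hx'_le hi])
  have hprod : ∏ k ∈ Finset.Icc 1 (n + 1), K (x' (k - 1)) (x' k) =
      (∏ k ∈ Finset.Icc 1 n, K (x (k - 1)) (x k)) * K (x n) b := by
    rw [Finset.prod_Icc_succ_top (by omega), hx'_succ, Nat.add_sub_cancel, hx'_le le_rfl]
    congr 1
    refine Finset.prod_congr rfl fun k hk => ?_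
    rw [Finset.mem_Icc] at hk
    rw [hx'_le (by omega), hx'_le hk.2]
  have hnonneg : 0 ≤ μ.real {y | y 0 = x 0} * ∏ k ∈ Finset.Icc 1 n, K (x (k - 1)) (x k) :=
    mul_nonneg measureReal_nonneg (Finset.prod_nonneg fun _ _ => hK _ _)
  rw [hcyl, hμ.2, hμ.2, ← ENNReal.ofReal_mul hnonneg, hprod, hx'_le (Nat.zero_le n), mul_assoc]

lemma IsMarkovLaw.measure_inter_succ (hμ : IsMarkovLaw μ K) (hK : ∀ a b, 0 ≤ K a b)
    (hS : DependsOn (· ∈ S) (Set.Iic n)) (ha : ∀ x ∈ S, x n = a) (b : ℕ) :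
    μ (S ∩ {x | x (n + 1) = b}) = μ S * ENNReal.ofReal (K a b) := by
  let r : (ℕ → ℕ) → (Set.Iic n → ℕ) := (Set.Iic n).domRestrict
  have hr : Measurable r := measurable_pi_lambda _ fun i => measurable_pi_apply i.1
  have hfiber (x : ℕ → ℕ) : r ⁻¹' {r x} = {y | ∀ i ≤ n, y i = x i} := by
    ext y
    simp [r, funext_iff]
  have hunion : S = ⋃ t : r '' S, r ⁻¹' {t.1} := by
    ext y
    simp only [Set.mem_iUnion, Subtype.exists, Set.mem_image, exists_prop, Set.mem_preimage,
      Set.mem_singleton_iff, exists_eq_right']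
    refine ⟨fun hy => ⟨y, hy, rfl⟩, fun ⟨x, hx, hxy⟩ => ?_⟩
    exact (hS fun i hi => congrFun hxy ⟨i, hi⟩).to_iff.mp hx
  rw [hunion]
  refine measure_iUnion_inter_eq_mul ?_ (fun t => hr (.of_discrete))
    (measurableSet_apply_eq _ _) ?_
  · exact fun s t hst => (Set.disjoint_singleton.mpr (Subtype.coe_ne_coe.mpr hst)).preimage r
  · rintro ⟨_, x, hx, rfl⟩
    rw [hfiber, hμ.measure_cylinder_inter hK, ha x hx]

lemma staySet_succ (M n k : ℕ) : staySet M n (k + 1) = staySet M n k ∩ {x | x (n + k) = M} := by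
  ext x
  exact Nat.forall_lt_succ_right

lemma dependsOn_inter_staySet (hS : DependsOn (· ∈ S) (Set.Iic n)) (M k : ℕ) :
    DependsOn (· ∈ S ∩ staySet M (n + 1) k) (Set.Iic (n + k)) := by
  intro x y hxy
  have hxyS := hS fun i hi => hxy i (Set.Iic_subset_Iic.mpr (by omega) hi)
  refine propext <| and_congr hxyS.to_iff <| forall₂_congr fun i hi => ?_
  rw [hxy _ (Set.mem_Iic.mpr (by omega))]

lemma apply_eq_of_mem_inter_staySet (hM : ∀ x ∈ S, x n = M) {k : ℕ} {x : ℕ → ℕ}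
    (hx : x ∈ S ∩ staySet M (n + 1) k) : x (n + k) = M := by
  cases k with
  | zero => exact hM x hx.1
  | succ k => exact (congrArg x (by omega)).trans (hx.2 k k.lt_succ_self)

lemma IsMarkovLaw.measure_inter_staySet (hμ : IsMarkovLaw μ K) (hK : ∀ a b, 0 ≤ K a b)
    (hS : DependsOn (· ∈ S) (Set.Iic n)) (hM : ∀ x ∈ S, x n = M) (k : ℕ) :
    μ (S ∩ staySet M (n + 1) k) = μ S * ENNReal.ofReal (K M M) ^ k := by
  induction k with
  | zero => simp [staySet]
  | succ k ih =>
    rw [staySet_succ, ← Set.inter_assoc, Nat.add_right_comm,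
      hμ.measure_inter_succ hK (dependsOn_inter_staySet hS M k)
        (fun _ => apply_eq_of_mem_inter_staySet hM), ih, pow_succ, mul_assoc]

-- Summing over the sojourn time at `M` produces a geometric series.
lemma IsMarkovLaw.measure_inter_exitSet_of_apply_eq (hμ : IsMarkovLaw μ K)
    (hK : ∀ a b, 0 ≤ K a b) (hS : DependsOn (· ∈ S) (Set.Iic n)) (hM : ∀ x ∈ S, x n = M)
    (hbM : b ≠ M) :
    μ (S ∩ exitSet M b (n + 1)) =
      μ S * (ENNReal.ofReal (K M b) * (1 - ENNReal.ofReal (K M M))⁻¹) := by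
  let E (k : ℕ) : Set (ℕ → ℕ) := S ∩ staySet M (n + 1) k ∩ {x | x (n + k + 1) = b}
  have hunion : S ∩ exitSet M b (n + 1) = ⋃ k, E k := by
    ext x
    simp [E, exitSet, and_assoc, Nat.add_right_comm]
  have hE (k : ℕ) : μ (E k) = μ S * ENNReal.ofReal (K M M) ^ k * ENNReal.ofReal (K M b) := by
    rw [hμ.measure_inter_succ hK (dependsOn_inter_staySet hS M k)
      (fun _ => apply_eq_of_mem_inter_staySet hM), hμ.measure_inter_staySet hK hS hM]
  have hmeas (k : ℕ) : MeasurableSet (E k) :=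
    (measurableSet_of_dependsOn (dependsOn_inter_staySet hS M k)).inter
      (measurableSet_apply_eq _ _)
  have hdisj : Pairwise (Function.onFun Disjoint E) := by
    refine (pairwise_disjoint_on E).mpr fun k l hkl => Set.disjoint_left.mpr ?_
    rintro x ⟨-, hxb⟩ ⟨⟨-, hstay⟩, -⟩
    have hxM : x (n + 1 + k) = M := hstay k hkl
    rw [Nat.add_right_comm] at hxM
    exact hbM (hxb.symm.trans hxM)
  rw [hunion, measure_iUnion hdisj hmeas]
  simp only [hE, ENNReal.tsum_mul_right, ENNReal.tsum_mul_left, ENNReal.tsum_geometric]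
  ring

lemma exitSet_eq_union (M b n : ℕ) :
    exitSet M b n = {x | x n = b} ∪ {x | x n = M} ∩ exitSet M b (n + 1) := by
  ext x
  simp only [exitSet, staySet, Set.mem_ofPred_eq, Set.mem_union, Set.mem_inter_iff]
  constructor
  · rintro ⟨_ | k, hstay, hb⟩
    · exact .inl hb
    · refine .inr ⟨hstay 0 k.succ_pos, k, fun i hi => ?_, ?_⟩
      · simpa [Nat.add_right_comm, Nat.add_assoc] using hstay (i + 1) (Nat.succ_lt_succ hi)
      · simpa [Nat.add_right_comm, Nat.add_assoc] using hb
  · rintro (hb | ⟨hM, k, hstay, hb⟩)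
    · exact ⟨0, by simp, hb⟩
    · refine ⟨k + 1, fun i hi => ?_, by rwa [← Nat.add_assoc, Nat.add_right_comm]⟩
      cases i with
      | zero => exact hM
      | succ i => rw [← Nat.add_assoc, Nat.add_right_comm, hstay i (by omega)]

lemma measure_inter_exitSet (μ : Measure (ℕ → ℕ)) (hS : MeasurableSet S) (hbM : b ≠ M) (n : ℕ) :
    μ (S ∩ exitSet M b n) =
      μ (S ∩ {x | x n = b}) + μ (S ∩ {x | x n = M} ∩ exitSet M b (n + 1)) := by
  have hdisj : Disjoint {x : ℕ → ℕ | x n = b} ({x | x n = M} ∩ exitSet M b (n + 1)) :=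
    Set.disjoint_left.mpr fun x hb hM => hbM (hb.symm.trans hM.1)
  rw [exitSet_eq_union, Set.inter_union_distrib_left,
    measure_union' (hdisj.mono Set.inter_subset_right Set.inter_subset_right)
      (hS.inter (measurableSet_apply_eq n b)), Set.inter_assoc]

end MarkovLaw

section ExitProb

/-- The probability that a chain started at `M`, with row `ρ` of transition probabilities there,
has `b` as its first value other than `M`; a chain that never leaves `M` counts as reaching the
cemetery `0`. These are the constants `C^K` of the compatibility condition. -/
noncomputable def exitProb (ρ : ℕ → ℝ) (M b : ℕ) : ℝ :=
  if ρ M < 1 then ρ b / (1 - ρ M) else if b = 0 then 1 else 0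

variable {π ρ : ℕ → ℝ} {M b : ℕ}

lemma exitProb_nonneg (hρ : ∀ b, 0 ≤ ρ b) (M b : ℕ) : 0 ≤ exitProb ρ M b := by
  unfold exitProb
  split_ifs with hM
  exacts [div_nonneg (hρ b) (sub_nonneg.mpr hM.le), zero_le_one, le_rfl]

lemma sum_exitProb (hM : 0 < M) (hρ : ∑ b ∈ Finset.range (M + 1), ρ b = 1) :
    ∑ b ∈ Finset.range M, exitProb ρ M b = 1 := by
  unfold exitProb
  rw [Finset.sum_range_succ, ← eq_sub_iff_add_eq] at hρ
  by_cases hlt : ρ M < 1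
  · simp only [if_pos hlt]
    rw [← Finset.sum_div, hρ, div_self (sub_pos.mpr hlt).ne']
  · simp [hlt, hM.ne']

lemma sum_add_mul_exitProb (hM : 0 < M) (hπ : ∑ b ∈ Finset.range (M + 1), π b = 1)
    (hρ : ∑ b ∈ Finset.range (M + 1), ρ b = 1) :
    ∑ b ∈ Finset.range M, (π b + π M * exitProb ρ M b) = 1 := by
  rw [Finset.sum_add_distrib, ← Finset.mul_sum, sum_exitProb hM hρ, mul_one,
    ← Finset.sum_range_succ, hπ]

-- When `ρ M = 1` the right-hand side is `0 * ⊤ = 0`.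
lemma ofReal_exitProb (hρ : ∀ b, 0 ≤ ρ b) (hsum : ∑ b ∈ Finset.range (M + 1), ρ b = 1)
    (hb : b ≠ 0) (hbM : b < M) :
    ENNReal.ofReal (exitProb ρ M b) =
      ENNReal.ofReal (ρ b) * (1 - ENNReal.ofReal (ρ M))⁻¹ := by
  unfold exitProb
  split_ifs with hlt
  · rw [ENNReal.ofReal_div_of_pos (sub_pos.mpr hlt), ENNReal.ofReal_sub _ (hρ M),
      ENNReal.ofReal_one, div_eq_mul_inv]
  · have hle : ρ b ≤ ∑ c ∈ Finset.range M, ρ c :=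
      Finset.single_le_sum (fun c _ => hρ c) (Finset.mem_range.mpr hbM)
    rw [Finset.sum_range_succ] at hsum
    have hρb : ρ b = 0 := le_antisymm (by linarith) (hρ b)
    simp [hρb]

end ExitProb

section ProjectedLaw

variable {μ : Measure (ℕ → ℕ)} {K : ℕ → ℕ → ℝ} {S : Set (ℕ → ℕ)} {x : ℕ → ℕ}
  {M N j n a b : ℕ}

lemma IsMarkovLaw.measure_inter_exitSet_succ (hμ : IsMarkovLaw μ K) (hK : ∀ a b, 0 ≤ K a b)
    (hsum : ∑ b ∈ Finset.range (M + 1), K M b = 1) (hS : DependsOn (· ∈ S) (Set.Iic n))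
    (ha : ∀ x ∈ S, x n = a) (hb : b ≠ 0) (hbM : b < M) :
    μ (S ∩ exitSet M b (n + 1)) =
      μ S * ENNReal.ofReal (K a b + K a M * exitProb (K M) M b) := by
  have hSM : DependsOn (· ∈ S ∩ {x | x (n + 1) = M}) (Set.Iic (n + 1)) := fun x y hxy =>
    propext <| and_congr (hS fun i hi => hxy i (Set.Iic_subset_Iic.mpr n.le_succ hi)).to_iff
      (by simp only [Set.mem_ofPred_eq, hxy _ Set.self_mem_Iic])
  rw [measure_inter_exitSet μ (measurableSet_of_dependsOn hS) hbM.ne,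
    hμ.measure_inter_exitSet_of_apply_eq hK hSM (fun _ hx => hx.2) hbM.ne,
    hμ.measure_inter_succ hK hS ha, hμ.measure_inter_succ hK hS ha,
    ← ofReal_exitProb (hK M) hsum hb hbM, mul_assoc, ← mul_add, ← ENNReal.ofReal_mul (hK a M),
    ← ENNReal.ofReal_add (hK a b) (mul_nonneg (hK a M) (exitProb_nonneg (hK M) M b))]

lemma IsMarkovLaw.measureReal_exitSet_zero [IsFiniteMeasure μ] (hμ : IsMarkovLaw μ K)
    (hK : ∀ a b, 0 ≤ K a b) (hsum : ∑ b ∈ Finset.range (M + 1), K M b = 1) (hb : b ≠ 0)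
    (hbM : b < M) :
    μ.real (exitSet M b 0) =
      μ.real {x | x 0 = b} + μ.real {x | x 0 = M} * exitProb (K M) M b := by
  have hSM : DependsOn (· ∈ {x : ℕ → ℕ | x 0 = M}) (Set.Iic 0) := fun x y hxy => by
    simp only [Set.mem_ofPred_eq, hxy 0 Set.self_mem_Iic]
  have hdecomp := measure_inter_exitSet μ MeasurableSet.univ hbM.ne 0
  simp only [Set.univ_inter] at hdecomp
  rw [hμ.measure_inter_exitSet_of_apply_eq hK hSM (fun _ hx => hx) hbM.ne,
    ← ofReal_exitProb (hK M) hsum hb hbM] at hdecomp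
  rw [measureReal_def, hdecomp, ENNReal.toReal_add (measure_ne_top _ _)
    (ENNReal.mul_ne_top (measure_ne_top _ _) ENNReal.ofReal_ne_top), ENNReal.toReal_mul,
    ENNReal.toReal_ofReal (exitProb_nonneg (hK M) M b), measureReal_def, measureReal_def]

lemma proj_zero_eq_iff_mem_exitSet (hx : ∀ i, x i ≤ N + 1) (hb : b ≠ 0) (hbN : b ≤ N) :
    proj N x 0 = b ↔ x ∈ exitSet (N + 1) b 0 := by
  have hgt (i : ℕ) : N < x i ↔ x i = N + 1 := by
    have := hx i
    omega
  simp only [proj_eq_iff hb, hitIdx_zero_eq_iff, hgt, exitSet, staySet, Set.mem_ofPred_eq,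
    Nat.zero_add]
  exact exists_congr fun n =>
    ⟨fun h => ⟨h.1.2, h.2⟩, fun h => ⟨⟨h.2.trans_le hbN, h.1⟩, h.2⟩⟩

lemma proj_succ_eq_iff_mem_exitSet (hx : ∀ i, x i ≤ N + 1) (hj : hitIdx x N j = n) (hb : b ≠ 0)
    (hbN : b ≤ N) : proj N x (j + 1) = b ↔ x ∈ exitSet (N + 1) b (n + 1) := by
  have hgt (i : ℕ) : N < x i ↔ x i = N + 1 := by
    have := hx i
    omega
  simp only [proj_eq_iff hb, hitIdx_succ_eq_iff, hj, Nat.cast_inj, hgt, exitSet, staySet,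
    Set.mem_ofPred_eq]
  constructor
  · rintro ⟨l, ⟨_, hnl, rfl, -, hbtw⟩, hl⟩
    obtain ⟨k, rfl⟩ := Nat.exists_eq_add_of_le (Nat.succ_le_of_lt hnl)
    exact ⟨k, fun i hi => hbtw _ (by omega) (by omega), hl⟩
  · rintro ⟨k, hstay, hk⟩
    refine ⟨n + 1 + k, ⟨n, by omega, rfl, hk.trans_le hbN, fun i hi hik => ?_⟩, hk⟩
    obtain ⟨l, rfl⟩ := Nat.exists_eq_add_of_le (Nat.succ_le_of_lt hi)
    exact hstay l (by omega)

lemma IsMarkovLaw.measure_proj_eq_inter_proj_succ_eq (hμ : IsMarkovLaw μ K)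
    (hK : ∀ a b, 0 ≤ K a b) (hle : ∀ᵐ x ∂μ, ∀ i, x i ≤ N + 1)
    (hsum : ∑ b ∈ Finset.range (N + 2), K (N + 1) b = 1) (ha : a ≠ 0) (hb : b ≠ 0)
    (hbN : b ≤ N) (j : ℕ) :
    μ ({x | proj N x j = a} ∩ {x | proj N x (j + 1) = b}) =
      μ {x | proj N x j = a} *
        ENNReal.ofReal (K a b + K a (N + 1) * exitProb (K (N + 1)) (N + 1) b) := by
  let F (n : ℕ) : Set (ℕ → ℕ) := {x | hitIdx x N j = n ∧ x n = a}
  have hF (n : ℕ) : DependsOn (· ∈ F n) (Set.Iic n) := fun x y hxy =>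
    propext <| and_congr (dependsOn_hitIdx_eq N j n hxy).to_iff (by rw [hxy n Set.self_mem_Iic])
  have hunion : {x | proj N x j = a} = ⋃ n, F n := by
    ext x
    simp [F, proj_eq_iff ha]
  have hdisj : Pairwise (Function.onFun Disjoint F) := fun m n hmn =>
    Set.disjoint_left.mpr fun x hm hn => hmn (by exact_mod_cast hm.1.symm.trans hn.1)
  rw [hunion]
  refine measure_iUnion_inter_eq_mul hdisj (fun n => measurableSet_of_dependsOn (hF n))
    (measurableSet_proj_apply_eq N (j + 1) b) fun n => ?_
  rw [← hμ.measure_inter_exitSet_succ hK hsum (hF n) (fun _ hx => hx.2) hb (by omega)]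
  refine measure_congr <| Filter.eventuallyEq_set.mpr ?_
  filter_upwards [hle] with x hx
  exact and_congr_right fun hxF => proj_succ_eq_iff_mem_exitSet hx hxF.1 hb hbN

end ProjectedLaw

section FiberSums

variable {α : Type*} [MeasurableSpace α] {μ : Measure α} [IsFiniteMeasure μ] {f : α → ℕ} {N : ℕ}

lemma sum_measureReal_inter_fiber (hf : Measurable f) (hfN : ∀ᵐ x ∂μ, f x ≤ N) (F : Set α) :
    ∑ b ∈ Finset.range (N + 1), μ.real (F ∩ {x | f x = b}) = μ.real F := by
  have hmeas (b : ℕ) : MeasurableSet (f ⁻¹' {b}) := hf (measurableSet_singleton b)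
  have hsum := sum_measureReal_preimage_singleton (μ := μ.restrict F) (Finset.range (N + 1))
    fun b _ => hmeas b
  rw [measureReal_restrict_apply (hf (Finset.measurableSet _))] at hsum
  simp only [measureReal_restrict_apply (hmeas _)] at hsum
  simp only [Set.inter_comm F]
  refine hsum.trans (measureReal_congr <| Filter.eventuallyEq_set.mpr ?_)
  filter_upwards [hfN] with x hx
  simpa using fun _ => Nat.lt_succ_of_le hx

lemma measureReal_inter_fiber_eq_mul {F : Set α} {q : ℕ → ℝ} (hf : Measurable f)
    (hfN : ∀ᵐ x ∂μ, f x ≤ N) (hq : ∑ b ∈ Finset.range (N + 1), q b = 1)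
    (h : ∀ b, b ≠ 0 → b ≤ N → μ.real (F ∩ {x | f x = b}) = μ.real F * q b) {b : ℕ} (hb : b ≤ N) :
    μ.real (F ∩ {x | f x = b}) = μ.real F * q b := by
  rcases eq_or_ne b 0 with rfl | hb0
  · have htotal := (sum_measureReal_inter_fiber hf hfN F).trans (mul_one (μ.real F)).symm
    rw [← hq, Finset.mul_sum, Finset.sum_range_succ', Finset.sum_range_succ' (μ.real F * q ·)]
      at htotal
    rw [Finset.sum_congr rfl fun b hb => h (b + 1) b.succ_ne_zero (Finset.mem_range.mp hb)]
      at htotal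
    exact add_left_cancel htotal
  · exact h b hb0 hb

end FiberSums

section TransitionMatrix

variable {K : ℕ → ℕ → ℝ} {N a b : ℕ}

lemma projK_apply_eq (ha : 1 ≤ a ∧ a ≤ N) (hb : b ≤ N) :
    projK N K a b = K a b + K a (N + 1) * exitProb (K (N + 1)) (N + 1) b := by
  simp only [projK, if_pos ha, if_pos hb, exitProb]
  split_ifs with hlt hb0
  · rw [mul_div_assoc]
  · rw [hb0, mul_one]
  · rw [mul_zero, add_zero]

lemma projK_row_eq_single (ha : ¬(1 ≤ a ∧ a ≤ N)) : projK N K a = Pi.single a 1 := by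
  funext b
  simp only [projK, if_neg ha, Pi.single_apply, eq_comm]

lemma IsStochastic.row_eq_single (hK : IsStochastic K) (ha : K a a = 1) :
    K a = Pi.single a 1 := by
  have hrest := hasSum_ite_sub_hasSum (hK.2 a) a
  rw [ha, sub_self, hasSum_zero_iff_of_nonneg fun b => by split_ifs; exacts [le_rfl, hK.1 a b]]
    at hrest
  funext b
  rcases eq_or_ne b a with rfl | hba
  · rw [ha, Pi.single_eq_same]
  · simpa [hba] using congrFun hrest b

end TransitionMatrix

section CanonicalLaw

/-- The state `a` is visited with positive probability by a path with law `μ`. The row at `a` of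
the transition matrix of a Markov chain is determined by its law exactly when this holds. -/
def IsVisited (μ : Measure (ℕ → ℕ)) (a : ℕ) : Prop := ∃ j, μ {x | x j = a} ≠ 0

/-- `μ` is the law of a Markov chain in `{1, …, N}` with cemetery `0`, and `K` is its canonical
transition matrix: the law says nothing about the rows of unvisited states, and these are normalized
to jump to the cemetery, so that `K` becomes a function of `μ`. -/
structure IsCanonicalLaw (N : ℕ) (μ : Measure (ℕ → ℕ)) (K : ℕ → ℕ → ℝ) : Prop where
  isMarkovLaw : IsMarkovLaw μ K
  memKN : MemKN N K
  ae_le : ∀ᵐ x ∂μ, ∀ i, x i ≤ N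
  row_of_not_isVisited : ∀ a ≤ N, ¬IsVisited μ a → K a = Pi.single 0 1

open Classical in
/-- The matrix `K` with the rows of those states of `{0, …, N}` that `μ` does not visit redirected
to the cemetery. -/
noncomputable def killUnvisited (N : ℕ) (μ : Measure (ℕ → ℕ)) (K : ℕ → ℕ → ℝ) : ℕ → ℕ → ℝ :=
  fun a => if a ≤ N ∧ ¬IsVisited μ a then Pi.single 0 1 else K a

variable {μ : Measure (ℕ → ℕ)} {K : ℕ → ℕ → ℝ} {N a b : ℕ}

lemma IsMarkovLaw.apply_eq_of_isVisited [IsFiniteMeasure μ] (hμ : IsMarkovLaw μ K)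
    (hK : ∀ a b, 0 ≤ K a b) (ha : IsVisited μ a) {q : ℝ}
    (h : ∀ j, μ.real ({x | x j = a} ∩ {x | x (j + 1) = b}) = μ.real {x | x j = a} * q) :
    K a b = q := by
  obtain ⟨j, hj⟩ := ha
  have hdep : DependsOn (· ∈ {x : ℕ → ℕ | x j = a}) (Set.Iic j) := fun x y hxy => by
    simp only [Set.mem_ofPred_eq, hxy j Set.self_mem_Iic]
  have hstep := h j
  rw [measureReal_def, hμ.measure_inter_succ hK hdep (fun _ hx => hx), ENNReal.toReal_mul,
    ENNReal.toReal_ofReal (hK a b), ← measureReal_def] at hstep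
  exact mul_left_cancel₀ ((measureReal_ne_zero_iff).mpr hj) hstep

lemma IsVisited.map_proj (ha : IsVisited μ a) (haN : a ≤ N) : IsVisited (μ.map (proj N)) a := by
  obtain ⟨n, hn⟩ := ha
  by_contra hnot
  simp only [IsVisited, not_exists, not_not,
    Measure.map_apply (measurable_proj N) (measurableSet_apply_eq _ a)] at hnot
  refine hn (measure_mono_null (fun x hx => ?_) (measure_iUnion_null hnot))
  obtain ⟨j, hj⟩ := exists_proj_eq (Eq.trans_le hx haN)
  exact Set.mem_iUnion.mpr ⟨j, hj.trans hx⟩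

lemma memKN_killUnvisited (hK : MemKN N K) (μ : Measure (ℕ → ℕ)) :
    MemKN N (killUnvisited N μ K) := by
  refine ⟨⟨fun a b => ?_, fun a => ?_⟩, fun a ha => ?_⟩ <;> unfold killUnvisited <;>
    split_ifs with h
  · rw [Pi.single_apply]
    positivity
  · exact hK.1.1 a b
  · exact hasSum_pi_single 0 1
  · exact hK.1.2 a
  · obtain rfl : a = 0 := by omega
    exact Pi.single_eq_same 0 1
  · exact hK.2 a ha

lemma isMarkovLaw_killUnvisited (hμ : IsMarkovLaw μ K) (hK : ∀ a b, 0 ≤ K a b) (N : ℕ) :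
    IsMarkovLaw μ (killUnvisited N μ K) := by
  refine ⟨hμ.1, fun l a => ?_⟩
  rw [hμ.2]
  congr 1
  induction l with
  | zero => simp
  | succ l ih =>
    rw [Finset.prod_Icc_succ_top (by omega), Finset.prod_Icc_succ_top (by omega), ← mul_assoc,
      ← mul_assoc, ← ih, Nat.add_sub_cancel]
    by_cases hl : a l ≤ N ∧ ¬IsVisited μ (a l)
    · have hnull : μ {x | ∀ i ≤ l, x i = a i} = 0 := by
        simp only [IsVisited, not_exists, not_not] at hl
        exact measure_mono_null (fun x hx => hx l le_rfl) (hl.2 l)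
      rw [hμ.2, ENNReal.ofReal_eq_zero] at hnull
      rw [hnull.antisymm (mul_nonneg measureReal_nonneg (Finset.prod_nonneg fun _ _ => hK _ _)),
        zero_mul, zero_mul]
    · rw [killUnvisited, if_neg hl]

lemma IsMarkovLaw.isCanonicalLaw_killUnvisited (hμ : IsMarkovLaw μ K) (hK : MemKN N K)
    (hle : ∀ᵐ x ∂μ, ∀ i, x i ≤ N) : IsCanonicalLaw N μ (killUnvisited N μ K) where
  isMarkovLaw := isMarkovLaw_killUnvisited hμ hK.1.1 N
  memKN := memKN_killUnvisited hK μ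
  ae_le := hle
  row_of_not_isVisited _ ha hnot := if_pos ⟨ha, hnot⟩

namespace IsCanonicalLaw

lemma nonneg (h : IsCanonicalLaw N μ K) (a b : ℕ) : 0 ≤ K a b := h.memKN.1.1 a b

lemma measure_apply_eq_zero (h : IsCanonicalLaw N μ K) (j : ℕ) (hb : N < b) :
    μ {x | x j = b} = 0 := by
  refine measure_mono_null ?_ (ae_iff.mp h.ae_le)
  exact fun x hx hle => (hb.trans_eq hx.symm).not_ge (hle j)

lemma sum_measureReal_apply_zero [IsProbabilityMeasure μ] (h : IsCanonicalLaw N μ K) :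
    ∑ b ∈ Finset.range (N + 1), μ.real {x | x 0 = b} = 1 := by
  simpa using sum_measureReal_inter_fiber (measurable_pi_apply 0)
    (h.ae_le.mono fun _ hx => hx 0) Set.univ

lemma apply_eq_zero [IsFiniteMeasure μ] (h : IsCanonicalLaw N μ K) (ha : a ≤ N) (hb : N < b) :
    K a b = 0 := by
  by_cases hv : IsVisited μ a
  · refine h.isMarkovLaw.apply_eq_of_isVisited h.nonneg hv fun j => ?_
    rw [mul_zero, measureReal_def, measure_mono_null Set.inter_subset_right
      (h.measure_apply_eq_zero (j + 1) hb), ENNReal.toReal_zero]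
  · rw [h.row_of_not_isVisited a ha hv, Pi.single_eq_of_ne (by omega)]

lemma sum_row [IsFiniteMeasure μ] (h : IsCanonicalLaw N μ K) (ha : a ≤ N) :
    ∑ b ∈ Finset.range (N + 1), K a b = 1 := by
  refine (hasSum_sum_of_ne_finset_zero fun b hb => h.apply_eq_zero ha ?_).unique (h.memKN.1.2 a)
  simpa using hb

lemma measureReal_proj_zero [IsProbabilityMeasure μ] (h : IsCanonicalLaw (N + 1) μ K)
    (hb : b ≤ N) :
    μ.real {x | proj N x 0 = b} =
      μ.real {x | x 0 = b} + μ.real {x | x 0 = N + 1} * exitProb (K (N + 1)) (N + 1) b := by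
  have hfiber := measureReal_inter_fiber_eq_mul (μ := μ) (F := Set.univ) (f := (proj N · 0))
    ((measurable_pi_apply 0).comp (measurable_proj N)) (.of_forall fun x => proj_le N x 0)
    (sum_add_mul_exitProb N.succ_pos h.sum_measureReal_apply_zero (h.sum_row le_rfl)) ?_ hb
  · simpa using hfiber
  intro b hb0 hbN
  rw [Set.univ_inter, probReal_univ, one_mul,
    ← h.isMarkovLaw.measureReal_exitSet_zero h.nonneg (h.sum_row le_rfl) hb0 (by omega)]
  refine measureReal_congr <| Filter.eventuallyEq_set.mpr ?_
  filter_upwards [h.ae_le] with x hx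
  exact proj_zero_eq_iff_mem_exitSet hx hb0 hbN

lemma measureReal_proj_succ [IsFiniteMeasure μ] (h : IsCanonicalLaw (N + 1) μ K)
    (ha : 1 ≤ a ∧ a ≤ N) (hb : b ≤ N) (j : ℕ) :
    μ.real ({x | proj N x j = a} ∩ {x | proj N x (j + 1) = b}) =
      μ.real {x | proj N x j = a} * projK N K a b := by
  rw [projK_apply_eq ha hb]
  refine measureReal_inter_fiber_eq_mul
    ((measurable_pi_apply (j + 1)).comp (measurable_proj N)) (.of_forall fun x => proj_le N x _)
    (sum_add_mul_exitProb N.succ_pos (h.sum_row (by omega)) (h.sum_row le_rfl)) ?_ hb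
  intro b hb0 hbN
  rw [measureReal_def, Function.comp_def, h.isMarkovLaw.measure_proj_eq_inter_proj_succ_eq h.nonneg
    h.ae_le (h.sum_row le_rfl) (by omega) hb0 hbN, ENNReal.toReal_mul, ENNReal.toReal_ofReal
    (add_nonneg (h.nonneg a b) (mul_nonneg (h.nonneg _ _) (exitProb_nonneg (h.nonneg _) _ b))),
    measureReal_def]

theorem projK_eq {K' : ℕ → ℕ → ℝ} [IsFiniteMeasure μ] (h' : IsCanonicalLaw (N + 1) μ K')
    (h : IsCanonicalLaw N (μ.map (proj N)) K) : projK N K' = K := by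
  funext a b
  by_cases ha : 1 ≤ a ∧ a ≤ N
  swap
  · rw [projK_row_eq_single ha, h.memKN.1.row_eq_single (h.memKN.2 a ha)]
  by_cases hb : b ≤ N
  swap
  · rw [h.apply_eq_zero ha.2 (not_le.mp hb)]
    simp only [projK, if_pos ha, if_neg hb]
  by_cases hv : IsVisited (μ.map (proj N)) a
  · refine (h.isMarkovLaw.apply_eq_of_isVisited h.nonneg hv fun j => ?_).symm
    have hmeas := measurableSet_apply_eq j a
    rw [map_measureReal_apply (measurable_proj N) hmeas,
      map_measureReal_apply (measurable_proj N) (hmeas.inter (measurableSet_apply_eq _ b))]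
    exact h'.measureReal_proj_succ ha hb j
  · have hv' : ¬IsVisited μ a := fun hva => hv (hva.map_proj ha.2)
    rw [projK_apply_eq ha hb, h'.row_of_not_isVisited a (by omega) hv',
      h.row_of_not_isVisited a ha.2 hv, Pi.single_eq_of_ne N.succ_ne_zero, zero_mul, add_zero]

end IsCanonicalLaw

end CanonicalLaw

section VirtualLaw

/-- `μ N`, for `N = 1, 2, …`, are the laws of the levels of a virtual Markov chain, and `K N` are
their canonical transition matrices. -/
structure IsCanonicalVirtualLaw (μ : ℕ+ → Measure (ℕ → ℕ)) (K : ℕ+ → ℕ → ℕ → ℝ) : Prop where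
  isProbabilityMeasure : ∀ N, IsProbabilityMeasure (μ N)
  isCanonicalLaw : ∀ N : ℕ+, IsCanonicalLaw N (μ N) (K N)
  map_proj : ∀ N : ℕ+, (μ (N + 1)).map (proj N) = μ N

lemma Ccoef_eq_exitProb (K : ℕ+ → ℕ → ℕ → ℝ) (N : ℕ+) (a : ℕ) :
    Ccoef K N a = exitProb (K (N + 1) (N + 1)) (N + 1) a := by
  have hsucc : (N : ℕ).succPNat = N + 1 := PNat.eq rfl
  simp only [Ccoef, exitProb, hsucc, N.ne_zero, if_false]

namespace IsCanonicalVirtualLaw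

variable {μ : ℕ+ → Measure (ℕ → ℕ)} {K : ℕ+ → ℕ → ℕ → ℝ}

lemma memVTM (h : IsCanonicalVirtualLaw μ K) : MemVTM K := by
  refine ⟨fun N => (h.isCanonicalLaw N).memKN, fun N => ?_⟩
  have := h.isProbabilityMeasure (N + 1)
  exact (h.isCanonicalLaw (N + 1)).projK_eq ((h.map_proj N).symm ▸ h.isCanonicalLaw N)

lemma compatible (h : IsCanonicalVirtualLaw μ K) :
    Compatible (fun N a => (μ N).real {x | x 0 = a}) K := by
  intro N a ha
  have := h.isProbabilityMeasure (N + 1)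
  beta_reduce
  rw [Ccoef_eq_exitProb, ← h.map_proj N,
    map_measureReal_apply (measurable_proj N) (measurableSet_apply_eq 0 a)]
  exact (h.isCanonicalLaw (N + 1)).measureReal_proj_zero ha

lemma memD1 (h : IsCanonicalVirtualLaw μ K) : MemD1 fun N a => (μ N).real {x | x 0 = a} := by
  have := h.isProbabilityMeasure
  refine ⟨fun _ _ => measureReal_nonneg, fun N => ?_, fun N a ha => ?_, fun N a ha => ?_⟩
  · exact (h.isCanonicalLaw N).sum_measureReal_apply_zero
  · beta_reduce
    rw [measureReal_def, (h.isCanonicalLaw N).measure_apply_eq_zero 0 ha, ENNReal.toReal_zero]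
  · refine (le_add_of_nonneg_right ?_).trans_eq (h.compatible N a ha).symm
    rw [Ccoef_eq_exitProb]
    exact mul_nonneg measureReal_nonneg
      (exitProb_nonneg ((h.isCanonicalLaw (N + 1)).nonneg _) _ a)

end IsCanonicalVirtualLaw

end VirtualLaw

section Transport

variable {Ω : Type*} [MeasurableSpace Ω] {P : Measure Ω}

lemma isMarkovLaw_map_iff {Y : Ω → ℕ → ℕ} {K : ℕ → ℕ → ℝ} (hY : Measurable Y) :
    IsMarkovLaw (P.map Y) K ↔
      IsMarkovChain P (fun i ω => Y ω i) (fun a => (P {ω | Y ω 0 = a}).toReal) K := by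
  have hcyl (l : ℕ) (a : ℕ → ℕ) :
      P.map Y {x | ∀ i ≤ l, x i = a i} = P {ω | ∀ i ≤ l, Y ω i = a i} :=
    Measure.map_apply hY <| measurableSet_of_dependsOn (s := Set.Iic l) fun x y hxy =>
      propext <| forall₂_congr fun i hi => by rw [hxy i hi]
  have hinit (a : ℕ) : (P.map Y).real {x | x 0 = a} = (P {ω | Y ω 0 = a}).toReal :=
    map_measureReal_apply hY (measurableSet_apply_eq 0 a)
  simp only [IsMarkovLaw, IsMarkovChain, hcyl, hinit]
  exact and_congr_left' (iff_of_true measurable_pi_apply (measurable_pi_iff.mp hY))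

namespace IsMarkovChain

variable {Y : ℕ → Ω → ℕ} {ν : ℕ → ℝ} {K : ℕ → ℕ → ℝ}

lemma measure_apply_zero_eq (hY : IsMarkovChain P Y ν K) (a : ℕ) :
    P {ω | Y 0 ω = a} = ENNReal.ofReal (ν a) := by
  simpa using hY.2 0 fun _ => a

lemma isProbabilityMeasure (hY : IsMarkovChain P Y ν K) (hν : IsProbVec ν) :
    IsProbabilityMeasure P where
  measure_univ := by
    have hfiber (a : ℕ) : P (Y 0 ⁻¹' {a}) = ENNReal.ofReal (ν a) := hY.measure_apply_zero_eq a
    have hunion : ⋃ a, Y 0 ⁻¹' {a} = Set.univ := Set.iUnion_eq_univ_iff.mpr fun ω => ⟨_, rfl⟩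
    rw [← hunion, measure_iUnion (pairwise_disjoint_fiber (Y 0))
      fun a => hY.1 0 (measurableSet_singleton a)]
    simp only [hfiber]
    rw [← ENNReal.ofReal_tsum_of_nonneg hν.1 hν.2.summable, hν.2.tsum_eq, ENNReal.ofReal_one]

end IsMarkovChain

namespace IsVMC

variable {X : Ω → ℕ+ → ℕ → ℕ}

lemma measurable (hX : IsVMC P X) (N : ℕ+) : Measurable fun ω => X ω N := by
  obtain ⟨-, -, -, -, -, hmeas, -⟩ := hX.2 N
  exact measurable_pi_lambda _ hmeas

lemma isProbabilityMeasure (hX : IsVMC P X) : IsProbabilityMeasure P := by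
  obtain ⟨ν, K, hν, -, -, hK⟩ := hX.2 1
  exact hK.isProbabilityMeasure hν

lemma map_map_proj (hX : IsVMC P X) (N : ℕ+) :
    (P.map fun ω => X ω (N + 1)).map (proj N) = P.map fun ω => X ω N := by
  rw [Measure.map_map (measurable_proj N) (hX.measurable (N + 1))]
  refine Measure.map_congr ?_
  filter_upwards [hX.1] with ω hω
  exact hω.2 N

lemma exists_isCanonicalLaw (hX : IsVMC P X) (N : ℕ+) :
    ∃ K, IsCanonicalLaw N (P.map fun ω => X ω N) K := by
  obtain ⟨ν, K, hν, -, hK, hchain⟩ := hX.2 N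
  have hinit : (fun a => (P {ω | X ω N 0 = a}).toReal) = ν := funext fun a => by
    rw [hchain.measure_apply_zero_eq, ENNReal.toReal_ofReal (hν.1 a)]
  have hlaw : IsMarkovLaw (P.map fun ω => X ω N) K :=
    (isMarkovLaw_map_iff (hX.measurable N)).mpr (hinit ▸ hchain)
  refine ⟨_, hlaw.isCanonicalLaw_killUnvisited hK ?_⟩
  rw [ae_map_iff (hX.measurable N).aemeasurable (measurableSet_forall_apply_le N)]
  filter_upwards [hX.1] with ω hω
  exact (hω.1 N).2

lemma exists_isCanonicalVirtualLaw (hX : IsVMC P X) :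
    ∃ K, IsCanonicalVirtualLaw (fun N => P.map fun ω => X ω N) K := by
  choose K hK using hX.exists_isCanonicalLaw
  have := hX.isProbabilityMeasure
  exact ⟨K, fun N => Measure.isProbabilityMeasure_map (hX.measurable N).aemeasurable, hK,
    hX.map_map_proj⟩

end IsVMC

end Transport

/-- A virtual Markov chain has canonical data: the sequence of initial laws
ν_N = ℙ ∘ X_N(0)⁻¹ is a virtual distribution, and there is a virtual transition matrix K
such that each X_N is a Markov chain with data (ν_N, K_N) and (ν, K) is compatible. -/
theorem vmc_canonical_data {Ω : Type*} [MeasurableSpace Ω] (P : Measure Ω)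
    (X : Ω → ℕ+ → ℕ → ℕ) (hX : IsVMC P X) :
    MemD1 (fun (N : ℕ+) (a : ℕ) => (P {ω | X ω N 0 = a}).toReal) ∧
    ∃ K : ℕ+ → ℕ → ℕ → ℝ, MemVTM K ∧
      (∀ N : ℕ+, IsMarkovChain P (fun i ω => X ω N i)
        (fun a => (P {ω | X ω N 0 = a}).toReal) (K N)) ∧
      Compatible (fun (N : ℕ+) (a : ℕ) => (P {ω | X ω N 0 = a}).toReal) K := by
  obtain ⟨K, hK⟩ := hX.exists_isCanonicalVirtualLaw
  have hν : (fun (N : ℕ+) (a : ℕ) => (P {ω | X ω N 0 = a}).toReal) =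
      fun N a => (P.map fun ω => X ω N).real {x | x 0 = a} := by
    funext N a
    exact (map_measureReal_apply (hX.measurable N) (measurableSet_apply_eq 0 a)).symm
  rw [hν]
  exact ⟨hK.memD1, K, hK.memVTM,
    fun N => (isMarkovLaw_map_iff (hX.measurable N)).mp (hK.isCanonicalLaw N).isMarkovLaw,
    hK.compatible⟩
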